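/- Suppose G ≠ 0 and F + ⟪G, u_des⟫ + Λ ≥ 0, and set u* = u_des − ((F + ⟪G, u_des⟫ + Λ)/‖G‖²) • G. If additionally A·u* + b ≤ 0 (componentwise), then u* is the unique minimizer of J on the full feasible set K. (Case 2 of the explicit CBF-QP solution: the control Barrier function constraint is active and all control-limit constraints are inactive.) -/

import Mathlib

open RealInnerProductSpace Matrix

/-!
The point `u*` is the orthogonal projection of `u_des` onto the hyperplane where the barrier
constraint is active. Since `u_des` lies on the infeasible side of that hyperplane, the angle at
`u*` between `u_des` and any point of the half-space is at least a right angle, so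
`‖u* - u_des‖ ^ 2 + ‖u - u*‖ ^ 2 ≤ ‖u - u_des‖ ^ 2`. Intersecting the half-space with further
constraints that `u*` satisfies cannot change its unique nearest point.
-/

section ObtuseAngle

variable {E : Type*} [NormedAddCommGroup E] [InnerProductSpace ℝ E] {x y u : E}

theorem norm_sub_sq_add_norm_sub_sq_le_of_inner_nonpos (h : ⟪x - y, u - y⟫ ≤ 0) :
    ‖y - x‖ ^ 2 + ‖u - y‖ ^ 2 ≤ ‖u - x‖ ^ 2 := by
  have hexpand := norm_sub_sq_real (x - y) (u - y)
  rw [sub_sub_sub_cancel_right, norm_sub_rev x u, norm_sub_rev x y] at hexpand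
  linarith

theorem norm_sub_le_norm_sub_of_inner_nonpos (h : ⟪x - y, u - y⟫ ≤ 0) :
    ‖y - x‖ ≤ ‖u - x‖ := by
  refine le_of_sq_le_sq ?_ (norm_nonneg _)
  linarith [norm_sub_sq_add_norm_sub_sq_le_of_inner_nonpos h, sq_nonneg ‖u - y‖]

theorem eq_of_inner_nonpos_of_norm_sub_le (h : ⟪x - y, u - y⟫ ≤ 0)
    (hle : ‖u - x‖ ≤ ‖y - x‖) : u = y := by
  have hsq : ‖u - x‖ ^ 2 ≤ ‖y - x‖ ^ 2 := by gcongr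
  have hzero : ‖u - y‖ ^ 2 ≤ 0 := by
    linarith [norm_sub_sq_add_norm_sub_sq_le_of_inner_nonpos h]
  simpa [sub_eq_zero] using hzero

end ObtuseAngle

section HyperplaneProj

variable {E : Type*} [NormedAddCommGroup E] [InnerProductSpace ℝ E] {G x u : E} {r : ℝ}

/-- The orthogonal projection of `x` onto the hyperplane `{u | ⟪G, u⟫ = r}`, given by its closed
formula for `G ≠ 0`. For `G = 0`, where that set is not a hyperplane, the value is `x`. -/
noncomputable def hyperplaneProj (G : E) (r : ℝ) (x : E) : E :=
  x - ((⟪G, x⟫ - r) / ‖G‖ ^ 2) • G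

theorem inner_hyperplaneProj (hG : G ≠ 0) : ⟪G, hyperplaneProj G r x⟫ = r := by
  have hG2 : ‖G‖ ^ 2 ≠ 0 := pow_ne_zero 2 (norm_ne_zero_iff.mpr hG)
  rw [hyperplaneProj, inner_sub_right, real_inner_smul_right, real_inner_self_eq_norm_sq,
    div_mul_cancel₀ _ hG2, sub_sub_cancel]

theorem inner_sub_hyperplaneProj_nonpos (hG : G ≠ 0) (hx : r ≤ ⟪G, x⟫) (hu : ⟪G, u⟫ ≤ r) :
    ⟪x - hyperplaneProj G r x, u - hyperplaneProj G r x⟫ ≤ 0 := by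
  have hnormal : x - hyperplaneProj G r x = ((⟪G, x⟫ - r) / ‖G‖ ^ 2) • G := sub_sub_cancel _ _
  rw [hnormal, real_inner_smul_left, inner_sub_right, inner_hyperplaneProj hG]
  exact mul_nonpos_of_nonneg_of_nonpos
    (div_nonneg (sub_nonneg.mpr hx) (sq_nonneg _)) (sub_nonpos.mpr hu)

end HyperplaneProj

theorem cbf_qp_case2_full_general {E : Type*} [NormedAddCommGroup E] [InnerProductSpace ℝ E]
    (F Λ : ℝ) (G u_des : E) (S : Set E) (hG : G ≠ 0) (hpos : F + ⟪G, u_des⟫ + Λ ≥ 0)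
    (uStar : E) (huStar : uStar = u_des - ((F + ⟪G, u_des⟫ + Λ) / ‖G‖ ^ 2) • G)
    (hS : uStar ∈ S) (K : Set E) (hK : K = {u | F + ⟪G, u⟫ + Λ ≤ 0 ∧ u ∈ S})
    (J : E → ℝ) (hJ : ∀ u, J u = (1 / 2) * ‖u - u_des‖ ^ 2) :
    uStar ∈ K ∧ (∀ u ∈ K, J uStar ≤ J u) ∧ (∀ u ∈ K, J u = J uStar → u = uStar) := by
  have hproj : uStar = hyperplaneProj G (-(F + Λ)) u_des := by
    have hgap : F + ⟪G, u_des⟫ + Λ = ⟪G, u_des⟫ - -(F + Λ) := by ring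
    rw [huStar, hgap, hyperplaneProj]
  have hactive : ⟪G, uStar⟫ = -(F + Λ) := hproj ▸ inner_hyperplaneProj hG
  have hobtuse : ∀ u ∈ K, ⟪u_des - uStar, u - uStar⟫ ≤ 0 := by
    intro u hu
    rw [hK] at hu
    rw [hproj]
    exact inner_sub_hyperplaneProj_nonpos hG (by linarith) (by linarith [hu.1])
  have hJ_le (u v : E) : J u ≤ J v ↔ ‖u - u_des‖ ≤ ‖v - u_des‖ := by
    rw [hJ, hJ, mul_le_mul_iff_right₀ one_half_pos, sq_le_sq₀ (norm_nonneg _) (norm_nonneg _)]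
  refine ⟨?_, fun u hu => ?_, fun u hu hEq => ?_⟩
  · rw [hK]
    exact ⟨by linarith, hS⟩
  · exact (hJ_le _ _).mpr (norm_sub_le_norm_sub_of_inner_nonpos (hobtuse u hu))
  · exact eq_of_inner_nonpos_of_norm_sub_le (hobtuse u hu) ((hJ_le _ _).mp hEq.le)

/-- Case 2 of the explicit CBF-QP solution: if `G ≠ 0`, `F + ⟪G, u_des⟫ + Λ ≥ 0`, and the
projected input `u* = u_des − ((F + ⟪G, u_des⟫ + Λ)/‖G‖²) • G` also satisfies the control-limit
constraints `A·u* + b ≤ 0`, then `u*` is the unique minimizer of `J` on the full feasible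
set `K`. -/
theorem cbf_qp_case2_full (m p : ℕ) (F Λ : ℝ) (G u_des : EuclideanSpace ℝ (Fin m))
    (A : Matrix (Fin p) (Fin m) ℝ) (b : Fin p → ℝ)
    (hG : G ≠ 0) (hpos : F + ⟪G, u_des⟫ + Λ ≥ 0)
    (uStar : EuclideanSpace ℝ (Fin m))
    (huStar : uStar = u_des - ((F + ⟪G, u_des⟫ + Λ) / ‖G‖ ^ 2) • G)
    (hlim : ∀ i, A.mulVec uStar i + b i ≤ 0)
    (K : Set (EuclideanSpace ℝ (Fin m)))
    (hK : K = {u | F + ⟪G, u⟫ + Λ ≤ 0 ∧ ∀ i, A.mulVec u i + b i ≤ 0})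
    (J : EuclideanSpace ℝ (Fin m) → ℝ)
    (hJ : ∀ u, J u = (1 / 2) * ‖u - u_des‖ ^ 2) :
    uStar ∈ K ∧ (∀ u ∈ K, J uStar ≤ J u) ∧ (∀ u ∈ K, J u = J uStar → u = uStar) :=
  cbf_qp_case2_full_general F Λ G u_des {u | ∀ i, A.mulVec u i + b i ≤ 0} hG hpos
    uStar huStar hlim K hK J hJ
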